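/- Let A be a unital C*-algebra, n,m ≥ 1, and let q_{ij} ∈ ℂ with |q_{ij}| = 1 for i = 1,…,n, j = 1,…,m. Suppose s_1,…,s_n ∈ A satisfy s_i* s_i = 1 for all i, and t_1,…,t_m ∈ A satisfy t_j* t_l = δ_{jl}·1 for all j,l together with Σ_{j=1}^m t_j t_j* = 1. Then the following are equivalent: (i) s_i t_j = q_{ij} t_j s_i for all i and j; (ii) s_i* t_j = conj(q_{ij}) t_j s_i* for all i and j. -/

import Mathlib

open scoped BigOperators

/-!
Since `∑ l, t l * star (t l) = 1`, two elements of the algebra agree as soon as they agree after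
left multiplication by every `star (t l)`. Taking adjoints in `x * t l = c l • (t l * x)` moves
`star (t l)` past `star x`, so orthonormality of the `t l` identifies both
`star (t l) * (star x * t j)` and `star (t l) * (star (c j) • (t j * star x))` with
`star (c j) • star x` if `l = j` and with `0` otherwise. The converse is the same argument
applied to `star x` and `star ∘ c`.
-/

/-- A Cuntz family: isometries with pairwise orthogonal ranges that sum to the identity, as for
the generators of the Cuntz algebra `𝒪_m`. The relations make sense in any semiring with a star
operation. -/
structure IsCuntzFamily {A κ : Type*} [Semiring A] [Star A] [Fintype κ] [DecidableEq κ]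
    (t : κ → A) : Prop where
  star_mul_eq_ite (j l : κ) : star (t j) * t l = if j = l then 1 else 0
  sum_mul_star : ∑ j, t j * star (t j) = 1

theorem eq_of_forall_mul_eq_of_sum_mul_eq_one {A κ : Type*} [Semiring A] [Fintype κ]
    {u v : κ → A} (huv : ∑ l, u l * v l = 1) {a b : A} (h : ∀ l, v l * a = v l * b) : a = b :=
  calc
    a = ∑ l, u l * (v l * a) := by simp only [← mul_assoc, ← Finset.sum_mul, huv, one_mul]
    _ = ∑ l, u l * (v l * b) := by simp only [h]
    _ = b := by simp only [← mul_assoc, ← Finset.sum_mul, huv, one_mul]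

theorem star_mul_star_eq_smul_of_mul_eq_smul {R A : Type*} [Star R] [Mul A] [StarMul A]
    [SMul R A] [StarModule R A] {c : R} {x y : A} (h : x * y = c • (y * x)) :
    star y * star x = star c • (star x * star y) := by
  simpa only [star_mul, star_smul] using congrArg star h

namespace IsCuntzFamily

variable {R A κ : Type*} [CommSemiring R] [Semiring A] [StarMul A] [Algebra R A]
  [Fintype κ] [DecidableEq κ] {t : κ → A}

theorem star_mul_eq_smul_of_forall_mul_eq_smul [Star R] [StarModule R A] (ht : IsCuntzFamily t)
    {c : κ → R} {x : A} (h : ∀ j, x * t j = c j • (t j * x)) (j : κ) :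
    star x * t j = star (c j) • (t j * star x) := by
  refine eq_of_forall_mul_eq_of_sum_mul_eq_one ht.sum_mul_star fun l => ?_
  calc
    star (t l) * (star x * t j) = star (c l) • (star x * (star (t l) * t j)) := by
      rw [← mul_assoc, star_mul_star_eq_smul_of_mul_eq_smul (h l), smul_mul_assoc, mul_assoc]
    _ = star (c j) • (star (t l) * t j * star x) := by
      rw [ht.star_mul_eq_ite]
      split_ifs with hlj
      · rw [hlj, mul_one, one_mul]
      · rw [mul_zero, zero_mul, smul_zero, smul_zero]
    _ = star (t l) * (star (c j) • (t j * star x)) := by rw [mul_smul_comm, mul_assoc]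

theorem forall_mul_eq_smul_iff [InvolutiveStar R] [StarModule R A] (ht : IsCuntzFamily t)
    (c : κ → R) (x : A) :
    (∀ j, x * t j = c j • (t j * x)) ↔
      ∀ j, star x * t j = star (c j) • (t j * star x) where
  mp := ht.star_mul_eq_smul_of_forall_mul_eq_smul
  mpr h j := by
    simpa only [star_star] using ht.star_mul_eq_smul_of_forall_mul_eq_smul h j

end IsCuntzFamily

theorem stmt_13_general {R A ι κ : Type*} [CommSemiring R] [InvolutiveStar R] [Semiring A]
    [StarMul A] [Algebra R A] [StarModule R A] [Fintype κ] [DecidableEq κ]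
    (q : ι → κ → R) (s : ι → A) {t : κ → A} (ht : IsCuntzFamily t) :
    (∀ i j, s i * t j = q i j • (t j * s i)) ↔
      ∀ i j, star (s i) * t j = star (q i j) • (t j * star (s i)) :=
  forall_congr' fun i => ht.forall_mul_eq_smul_iff (q i) (s i)

theorem stmt_13 {A : Type*} [NormedRing A] [StarRing A] [CStarRing A]
    [NormedAlgebra ℂ A] [StarModule ℂ A] [CompleteSpace A]
    {n m : ℕ} (hn : 1 ≤ n) (hm : 1 ≤ m)
    (q : Fin n → Fin m → ℂ) (hq : ∀ i j, ‖q i j‖ = 1)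
    (s : Fin n → A) (t : Fin m → A)
    (hs : ∀ i : Fin n, star (s i) * s i = 1)
    (ht : ∀ j l : Fin m, star (t j) * t l = if j = l then 1 else 0)
    (htP : ∑ j : Fin m, t j * star (t j) = 1) :
    (∀ (i : Fin n) (j : Fin m), s i * t j = q i j • (t j * s i)) ↔
    (∀ (i : Fin n) (j : Fin m),
      star (s i) * t j = (starRingEnd ℂ) (q i j) • (t j * star (s i))) :=
  stmt_13_general q s ⟨ht, htP⟩
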